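/- Pittel–Knuth integral formula: under the uniform preference distribution (realized by X, Y uniform on ([0,1]^{M×W})², where m prefers w₁ to w₂ iff X(m,w₁) < X(m,w₂) and w prefers m₁ to m₂ iff Y(m₁,w) < Y(m₂,w)), for every matching μ : M ≃ W, the probability that μ is stable equals the iterated integral over x ∈ [0,1]^M and y ∈ [0,1]^W of the product, over all pairs (m,w) with μ(m) ≠ w, of (1 − x_m · y_w). -/

import Mathlib

open MeasureTheory

/-- Under the uniform preference model induced by `XY = (X, Y)` (smaller values preferred),
the matching `μ` is stable: no pair `(m, w)` with `X(m,w) < X(m, μ m)` and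
`Y(m,w) < Y(μ⁻¹ w, w)`. -/
def IsStable {N : ℕ} (XY : (Fin N × Fin N → ℝ) × (Fin N × Fin N → ℝ))
    (μ : Fin N ≃ Fin N) : Prop :=
  ¬ ∃ m w, XY.1 (m, w) < XY.1 (m, μ m) ∧ XY.2 (m, w) < XY.2 (μ.symm w, w)

/-- The uniform probability measure on `([0,1]^{M×W})²`. -/
noncomputable def unifBox (N : ℕ) :
    Measure ((Fin N × Fin N → ℝ) × (Fin N × Fin N → ℝ)) :=
  (Measure.pi fun _ : Fin N × Fin N => volume.restrict (Set.Icc (0:ℝ) 1)).prod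
    (Measure.pi fun _ : Fin N × Fin N => volume.restrict (Set.Icc (0:ℝ) 1))

/-- The uniform measure on the unit interval. -/
noncomputable abbrev unitU : Measure ℝ := volume.restrict (Set.Icc (0:ℝ) 1)

instance unitU_prob : IsProbabilityMeasure unitU := ⟨by simp⟩

lemma unitU_Iio {x : ℝ} (hx : x ∈ Set.Icc (0:ℝ) 1) : unitU (Set.Iio x) = ENNReal.ofReal x := by
  rw [Measure.restrict_apply measurableSet_Iio]
  have : Set.Iio x ∩ Set.Icc 0 1 = Set.Ico 0 x := by
    ext t
    simp only [Set.mem_inter_iff, Set.mem_Iio, Set.mem_Icc, Set.mem_Ico]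
    constructor
    · rintro ⟨h1, h2, h3⟩
      exact ⟨h2, h1⟩
    · rintro ⟨h1, h2⟩
      exact ⟨h2, h1, h2.le.trans hx.2⟩
  rw [this]; simp

lemma pair_noblock {x y : ℝ} (hx : x ∈ Set.Icc (0:ℝ) 1) (hy : y ∈ Set.Icc (0:ℝ) 1) :
    ((unitU.prod unitU) {z : ℝ × ℝ | ¬ (z.1 < x ∧ z.2 < y)}).toReal = 1 - x * y := by
  have : {z : ℝ × ℝ | ¬ (z.1 < x ∧ z.2 < y)} = (Set.Iio x ×ˢ Set.Iio y)ᶜ := by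
    ext z; simp
  rw [this]
  change (unitU.prod unitU).real _ = _
  rw [probReal_compl_eq_one_sub (measurableSet_Iio.prod measurableSet_Iio), Measure.real,
    Measure.prod_prod, unitU_Iio hx, unitU_Iio hy, ENNReal.toReal_mul,
    ENNReal.toReal_ofReal hx.1, ENNReal.toReal_ofReal hy.1]

/-- Matched pairs are indexed by the man. -/
def eMan {N : ℕ} (μ : Fin N ≃ Fin N) : {mw : Fin N × Fin N // μ mw.1 = mw.2} ≃ Fin N where
  toFun i := i.1.1
  invFun m := ⟨(m, μ m), rfl⟩
  left_inv := by rintro ⟨⟨m, w⟩, h⟩; simp only at h; subst h; rfl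
  right_inv m := rfl

/-- Matched pairs are indexed by the woman. -/
def eWoman {N : ℕ} (μ : Fin N ≃ Fin N) : {mw : Fin N × Fin N // μ mw.1 = mw.2} ≃ Fin N where
  toFun i := i.1.2
  invFun w := ⟨(μ.symm w, w), by simp⟩
  left_inv := by rintro ⟨⟨m, w⟩, h⟩; simp only at h; subst h; simp
  right_inv m := rfl

/-- Stability in split coordinates. -/
def splitStable {N : ℕ} (μ : Fin N ≃ Fin N) :
    Set (({mw : Fin N × Fin N // μ mw.1 = mw.2} → ℝ × ℝ) ×
      ({mw : Fin N × Fin N // ¬ μ mw.1 = mw.2} → ℝ × ℝ)) :=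
  {ab | ∀ i, ¬ ((ab.2 i).1 < (ab.1 ((eMan μ).symm i.1.1)).1 ∧
    (ab.2 i).2 < (ab.1 ((eWoman μ).symm i.1.2)).2)}

lemma measurableSet_splitStable {N : ℕ} (μ : Fin N ≃ Fin N) :
    MeasurableSet (splitStable μ) := by
  unfold splitStable
  rw [Set.ofPred_forall]
  refine MeasurableSet.iInter fun i => ?_
  have aux : ∀ j k, MeasurableSet
      {ab : ({mw : Fin N × Fin N // μ mw.1 = mw.2} → ℝ × ℝ) ×
        ({mw : Fin N × Fin N // ¬ μ mw.1 = mw.2} → ℝ × ℝ) |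
        (ab.2 i).1 < (ab.1 j).1 ∧ (ab.2 i).2 < (ab.1 k).2} := by
    intro j k
    have f1 : Measurable fun ab : ({mw : Fin N × Fin N // μ mw.1 = mw.2} → ℝ × ℝ) ×
        ({mw : Fin N × Fin N // ¬ μ mw.1 = mw.2} → ℝ × ℝ) => ab.2 i := by fun_prop
    have f2 : ∀ j, Measurable fun ab : ({mw : Fin N × Fin N // μ mw.1 = mw.2} → ℝ × ℝ) ×
        ({mw : Fin N × Fin N // ¬ μ mw.1 = mw.2} → ℝ × ℝ) => ab.1 j := by
      intro j
      fun_prop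
    exact (measurableSet_lt f1.fst (f2 j).fst).inter (measurableSet_lt f1.snd (f2 k).snd)
  exact (aux _ _).compl

lemma unifBox_eq_split {N : ℕ} (μ : Fin N ≃ Fin N) :
    unifBox N {XY | IsStable XY μ} =
      ((Measure.pi fun _ : {mw : Fin N × Fin N // μ mw.1 = mw.2} => unitU.prod unitU).prod
        (Measure.pi fun _ : {mw : Fin N × Fin N // ¬ μ mw.1 = mw.2} => unitU.prod unitU))
        (splitStable μ) := by
  have h1 := measurePreserving_arrowProdEquivProdArrow ℝ ℝ (Fin N × Fin N)
    (fun _ => unitU) (fun _ => unitU)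
  have h2 := measurePreserving_piEquivPiSubtypeProd (fun _ : Fin N × Fin N => unitU.prod unitU)
    (fun mw => μ mw.1 = mw.2)
  have e1 := h1.measure_preimage_equiv {XY | IsStable XY μ}
  have e2 := h2.measure_preimage_equiv (splitStable μ)
  refine e1.symm.trans (Eq.trans ?_ e2)
  congr 1
  ext Z
  change (¬ ∃ m w, (Z (m, w)).1 < (Z (m, μ m)).1 ∧ (Z (m, w)).2 < (Z (μ.symm w, w)).2) ↔
    ∀ i : {mw : Fin N × Fin N // ¬ μ mw.1 = mw.2},
      ¬ ((Z i.1).1 < (Z (i.1.1, μ i.1.1)).1 ∧ (Z i.1).2 < (Z (μ.symm i.1.2, i.1.2)).2)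
  constructor
  · rintro h ⟨⟨m, w⟩, hi⟩ hb
    exact h ⟨m, w, hb⟩
  · rintro h ⟨m, w, hb⟩
    refine h ⟨(m, w), ?_⟩ hb
    rintro hi
    simp only at hi
    subst hi
    exact lt_irrefl _ hb.1

lemma section_split {N : ℕ} (μ : Fin N ≃ Fin N)
    (a : {mw : Fin N × Fin N // μ mw.1 = mw.2} → ℝ × ℝ)
    (ha : ∀ i, (a i).1 ∈ Set.Icc (0:ℝ) 1 ∧ (a i).2 ∈ Set.Icc (0:ℝ) 1) :
    ((Measure.pi fun _ : {mw : Fin N × Fin N // ¬ μ mw.1 = mw.2} => unitU.prod unitU)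
        (Prod.mk a ⁻¹' splitStable μ)).toReal =
      ∏ mw ∈ Finset.univ.filter fun mw : Fin N × Fin N => μ mw.1 ≠ mw.2,
        (1 - (a ((eMan μ).symm mw.1)).1 * (a ((eWoman μ).symm mw.2)).2) := by
  have : Prod.mk a ⁻¹' splitStable μ = Set.univ.pi
      fun i : {mw : Fin N × Fin N // ¬ μ mw.1 = mw.2} => {z : ℝ × ℝ |
        ¬ (z.1 < (a ((eMan μ).symm i.1.1)).1 ∧ z.2 < (a ((eWoman μ).symm i.1.2)).2)} := by
    ext b
    simp [splitStable]
  rw [this, Measure.pi_pi, ENNReal.toReal_prod]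
  rw [Finset.prod_congr rfl fun i _ => pair_noblock (ha _).1 (ha _).2]
  rw [Finset.prod_subtype (p := fun mw : Fin N × Fin N => ¬ μ mw.1 = mw.2) _ (by simp)]

lemma ae_unit {ι : Type*} [Fintype ι] :
    ∀ᵐ a ∂(Measure.pi fun _ : ι => unitU.prod unitU),
      ∀ i, (a i).1 ∈ Set.Icc (0:ℝ) 1 ∧ (a i).2 ∈ Set.Icc (0:ℝ) 1 := by
  rw [ae_all_iff]
  intro i
  have h : ∀ᵐ z ∂(unitU.prod unitU), z.1 ∈ Set.Icc (0:ℝ) 1 ∧ z.2 ∈ Set.Icc (0:ℝ) 1 := by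
    rw [Measure.prod_restrict]
    exact ae_restrict_mem (measurableSet_Icc.prod measurableSet_Icc)
  exact (Measure.tendsto_eval_ae_ae (μ := fun _ : ι => unitU.prod unitU) (i := i)).eventually h

/-- Knuth–Pittel integral formula: under the uniform preference distribution, the probability
that a fixed matching `μ` is stable equals
`∫_{[0,1]^M} ∫_{[0,1]^W} ∏_{(m,w) : μ m ≠ w} (1 - x_m y_w)`. -/
theorem prob_stable_eq_integral (N : ℕ) (hN : 1 ≤ N) (μ : Fin N ≃ Fin N) :
    (unifBox N {XY | IsStable XY μ}).toReal =
      ∫ x in Set.univ.pi fun _ : Fin N => Set.Icc (0:ℝ) 1,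
        ∫ y in Set.univ.pi fun _ : Fin N => Set.Icc (0:ℝ) 1,
          ∏ mw ∈ Finset.univ.filter fun mw : Fin N × Fin N => μ mw.1 ≠ mw.2,
            (1 - x mw.1 * y mw.2) := by
  let G : (Fin N → ℝ) × (Fin N → ℝ) → ℝ := fun z =>
    ∏ mw ∈ Finset.univ.filter fun mw : Fin N × Fin N => μ mw.1 ≠ mw.2,
      (1 - z.1 mw.1 * z.2 mw.2)
  have hG : Continuous G := by
    refine continuous_finsetProd _ fun i _ => ?_
    fun_prop
  have hc : IsCompact (Set.univ.pi fun _ : Fin N => Set.Icc (0:ℝ) 1) :=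
    isCompact_univ_pi fun _ => isCompact_Icc
  have hR := setIntegral_prod (μ := (volume : Measure (Fin N → ℝ)))
    (ν := (volume : Measure (Fin N → ℝ))) G
    (hG.continuousOn.integrableOn_compact (hc.prod hc))
  refine Eq.trans ?_ hR
  rw [← Measure.prod_restrict, volume_pi, Measure.restrict_pi_pi]
  have k1 := measurePreserving_arrowProdEquivProdArrow ℝ ℝ
    {mw : Fin N × Fin N // μ mw.1 = mw.2} (fun _ => unitU) (fun _ => unitU)
  have k2 := measurePreserving_arrowCongr' (fun _ => unitU) (fun _ => unitU) (eMan μ)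
    (MeasurableEquiv.refl ℝ) (fun _ => MeasurePreserving.id _)
  have k3 := measurePreserving_arrowCongr' (fun _ => unitU) (fun _ => unitU) (eWoman μ)
    (MeasurableEquiv.refl ℝ) (fun _ => MeasurePreserving.id _)
  have k4 := k2.prod k3
  have l4 := k4.integral_comp (MeasurableEquiv.prodCongr
    (MeasurableEquiv.arrowCongr' (eMan μ) (MeasurableEquiv.refl ℝ))
    (MeasurableEquiv.arrowCongr' (eWoman μ) (MeasurableEquiv.refl ℝ))).measurableEmbedding G
  refine Eq.trans ?_ l4
  refine Eq.trans ?_ (k1.integral_comp' _)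
  rw [unifBox_eq_split, Measure.prod_apply (measurableSet_splitStable μ),
    ← integral_toReal (measurable_measure_prodMk_left (measurableSet_splitStable μ)).aemeasurable
      (Filter.Eventually.of_forall fun _ => measure_lt_top _ _)]
  refine integral_congr_ae ?_
  filter_upwards [ae_unit] with a ha
  exact section_split μ a ha
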